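/- For u ∈ L¹(ℝ) and α ∉ πℤ, the Gauss means of the fractional Fourier integral of u converge to u almost everywhere: for a.e. t ∈ ℝ, ∫_ℝ (ℱ_α u)(x) K_{−α}(x,t) e^{−4π²εx²csc²α} dx → u(t) as ε → 0⁺. -/

import Mathlib

/-!
Write `c = cot α`, `k = csc α`. The product `K_α(x,s) K_{-α}(x,t)` equals
`|k| e^{-πict²} e^{πics²} e^{-2πikx(s-t)}`, because `A_α A_{-α} = |1 - ic| = |k|`
(`Aa_mul_Aa_neg`, `Ker_mul_Ker_neg`). The Gaussian factor makes the double integral absolutely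
convergent, so Fubini and the Fourier transform of a Gaussian turn the Gauss mean into
`e^{-πict²}` times the heat-kernel mean at time `ε` of the chirped function
`v(s) = e^{πics²} u(s)` (`gaussMean_eq`).

It remains to show that heat-kernel means of an integrable `v` converge to `v` almost everywhere
(`ae_tendsto_gaussian`). Since `e^{-a²/4} = ∫_{ρ > a} (ρ/2) e^{-ρ²/4} dρ`, the heat kernel is a
superposition of indicators of balls, and with `δ = √ε` the heat-kernel mean at `t` is
`(2√π)⁻¹ ∫_{ρ > 0} ρ² e^{-ρ²/4} (average of v over the ball of radius δρ about t) dρ`.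
At a point `t` where the Lebesgue differentiation theorem holds, these averages tend to `v t`; they
are also bounded uniformly in the radius (`exists_bound_average`), so dominated convergence and
`∫_{ρ > 0} ρ² e^{-ρ²/4} dρ = 2√π` give the limit.
-/

open MeasureTheory Real Filter Topology

/-- A_α = √(1 - i cot α) -/
noncomputable def Aa (α : ℝ) : ℂ :=
  ((1 : ℂ) - Complex.I * ((Real.cos α / Real.sin α : ℝ) : ℂ)) ^ ((1 : ℂ) / 2)

/-- The FRFT kernel K_α(x,t) = A_α exp[2πi(t²cot α/2 − xt csc α + x²cot α/2)]. -/
noncomputable def Ker (α : ℝ) (x t : ℝ) : ℂ :=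
  Aa α * Complex.exp (2 * (Real.pi : ℂ) * Complex.I *
    (((t : ℂ) ^ 2 / 2) * ((Real.cos α / Real.sin α : ℝ) : ℂ) -
      (x : ℂ) * (t : ℂ) * ((1 / Real.sin α : ℝ) : ℂ) +
      ((x : ℂ) ^ 2 / 2) * ((Real.cos α / Real.sin α : ℝ) : ℂ)))

/-! ### Heat-kernel means of an integrable function -/

/-- The weight `(ρ/2) e^{-ρ²/4}`, minus the derivative of `e^{-ρ²/4}`, by which indicators of balls
are superposed to give a Gaussian. -/
noncomputable def tailWeight (ρ : ℝ) : ℝ := ρ / 2 * Real.exp (-(1 / 4) * ρ ^ 2)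

lemma integrable_tailWeight : Integrable tailWeight := by
  have h := (integrable_mul_exp_neg_mul_sq (b := 1 / 4) (by norm_num)).const_mul (1 / 2)
  refine h.congr (Eventually.of_forall fun ρ => ?_)
  simp only [tailWeight]; ring

lemma integral_tailWeight_Ioi (a : ℝ) :
    ∫ ρ in Set.Ioi a, tailWeight ρ = Real.exp (-(1 / 4) * a ^ 2) := by
  have hderiv : ∀ x : ℝ,
      HasDerivAt (fun ρ : ℝ => -Real.exp (-(1 / 4) * ρ ^ 2)) (tailWeight x) x := by
    intro x
    have h := (((hasDerivAt_pow 2 x).const_mul (-(1 / 4) : ℝ)).exp).neg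
    refine h.congr_deriv ?_
    simp only [tailWeight]; push_cast; ring
  have hlim : Tendsto (fun ρ : ℝ => -Real.exp (-(1 / 4) * ρ ^ 2)) atTop (𝓝 0) := by
    rw [← neg_zero]
    refine (Real.tendsto_exp_atBot.comp ?_).neg
    exact (tendsto_pow_atTop two_ne_zero).const_mul_atTop_of_neg (by norm_num)
  rw [integral_Ioi_of_hasDerivAt_of_tendsto (hderiv a).continuousAt.continuousWithinAt
    (fun x _ => hderiv x) integrable_tailWeight.integrableOn hlim]
  simp

lemma integral_mul_tailWeight :
    ∫ ρ in Set.Ioi (0 : ℝ), 2 * ρ * tailWeight ρ = 2 * √π := by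
  have h := integral_rpow_mul_exp_neg_mul_rpow (p := 2) (q := 2) (b := 1 / 4)
    (by norm_num) (by norm_num) (by norm_num)
  have hG : Real.Gamma ((2 + 1) / 2) = √π / 2 := by
    rw [show ((2 : ℝ) + 1) / 2 = 1 / 2 + 1 by norm_num, Real.Gamma_add_one (by norm_num),
      Real.Gamma_one_half_eq]
    ring
  have hp : ((1 : ℝ) / 4) ^ (-(2 + 1) / 2 : ℝ) = 8 := by
    rw [show (1 : ℝ) / 4 = 2 ^ (-2 : ℝ) by rw [Real.rpow_neg (by norm_num)]; norm_num,
      ← Real.rpow_mul (by norm_num)]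
    norm_num
  rw [hG, hp] at h
  calc ∫ ρ in Set.Ioi (0 : ℝ), 2 * ρ * tailWeight ρ
      = ∫ ρ in Set.Ioi (0 : ℝ), ρ ^ (2 : ℝ) * Real.exp (-(1 / 4) * ρ ^ (2 : ℝ)) := by
        congr 1; ext ρ; simp only [tailWeight, Real.rpow_two]; ring
    _ = 2 * √π := by rw [h]; ring

lemma integrable_mul_tailWeight :
    IntegrableOn (fun ρ : ℝ => 2 * ρ * tailWeight ρ) (Set.Ioi 0) := by
  have h := integrableOn_rpow_mul_exp_neg_mul_sq (b := 1 / 4) (by norm_num) (s := 2) (by norm_num)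
  refine h.congr_fun (fun ρ _ => ?_) measurableSet_Ioi
  simp only [tailWeight, Real.rpow_two]; ring

/-- Integrability on the product space: it justifies exchanging the integrals over radii `ρ` and
points `s`, and gives the measurability in `ρ` of the integral over the ball. -/
lemma integrable_layer {v : ℝ → ℂ} (hv : Integrable v) (t δ : ℝ) :
    Integrable (Function.uncurry fun ρ s : ℝ =>
        (Metric.ball t (δ * ρ)).indicator (fun s => (tailWeight ρ : ℂ) * v s) s)
      ((volume.restrict (Set.Ioi (0 : ℝ))).prod volume) := by
  have h : Integrable (fun z : ℝ × ℝ => (tailWeight z.1 : ℂ) * v z.2)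
      ((volume.restrict (Set.Ioi (0 : ℝ))).prod volume) :=
    (integrable_tailWeight.ofReal.integrableOn (s := Set.Ioi (0 : ℝ))).mul_prod hv
  have hS : MeasurableSet {z : ℝ × ℝ | dist z.2 t < δ * z.1} :=
    measurableSet_lt (by fun_prop) (by fun_prop)
  refine (h.indicator hS).congr (Eventually.of_forall fun z => ?_)
  simp [Set.indicator, Function.uncurry, Metric.mem_ball]

lemma setIntegral_closedBall_eq_ball (v : ℝ → ℂ) (t r : ℝ) :
    ∫ s in Metric.closedBall t r, v s = ∫ s in Metric.ball t r, v s := by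
  rw [Real.closedBall_eq_Icc, Real.ball_eq_Ioo]
  exact setIntegral_congr_set Ioo_ae_eq_Icc.symm

lemma layer_inner (v : ℝ → ℂ) (t δ ρ : ℝ) :
    ∫ s, (Metric.ball t (δ * ρ)).indicator (fun s => (tailWeight ρ : ℂ) * v s) s
      = (tailWeight ρ : ℂ) * ∫ s in Metric.closedBall t (δ * ρ), v s := by
  rw [integral_indicator Metric.isOpen_ball.measurableSet, integral_const_mul,
    setIntegral_closedBall_eq_ball]

/-- Layer-cake formula: integrating against a Gaussian is integrating over balls centred at `t`,
with the radii weighted by `tailWeight`. -/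
lemma integral_gaussian_eq_layers {v : ℝ → ℂ} (hv : Integrable v) (t : ℝ) {δ : ℝ} (hδ : 0 < δ) :
    ∫ s, (Real.exp (-(1 / 4) * ((s - t) / δ) ^ 2) : ℂ) * v s
      = ∫ ρ in Set.Ioi (0 : ℝ),
          (tailWeight ρ : ℂ) * ∫ s in Metric.closedBall t (δ * ρ), v s := by
  simp_rw [← layer_inner]
  rw [integral_integral_swap (integrable_layer hv t δ)]
  congr 1; ext s
  have hset : ∀ ρ : ℝ, s ∈ Metric.ball t (δ * ρ) ↔ ρ ∈ Set.Ioi (|s - t| / δ) := by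
    intro ρ
    rw [Metric.mem_ball, Real.dist_eq, Set.mem_Ioi, div_lt_iff₀ hδ, mul_comm]
  have hfun : (fun ρ : ℝ => (Metric.ball t (δ * ρ)).indicator
      (fun s => (tailWeight ρ : ℂ) * v s) s)
      = (Set.Ioi (|s - t| / δ)).indicator (fun ρ => (tailWeight ρ : ℂ) * v s) := by
    ext ρ
    simp only [Set.indicator, hset]
  rw [hfun, setIntegral_indicator measurableSet_Ioi, Set.inter_eq_right.2
    (Set.Ioi_subset_Ioi (by positivity)), integral_mul_const, integral_complex_ofReal,
    integral_tailWeight_Ioi, div_pow, div_pow, sq_abs]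

/-- If the averages about `t` converge as the radius tends to `0`, they are bounded over all radii:
for small radii by the convergence, for large ones by `‖v‖₁` over the length of the ball. -/
lemma exists_bound_average {v : ℝ → ℂ} (hv : Integrable v) {t : ℝ} {l : ℂ}
    (h : Tendsto (fun r => ⨍ s in Metric.closedBall t r, v s) (𝓝[>] 0) (𝓝 l)) :
    ∃ C, ∀ r > 0, ‖⨍ s in Metric.closedBall t r, v s‖ ≤ C := by
  have hev : ∀ᶠ r in 𝓝[>] (0 : ℝ), ‖⨍ s in Metric.closedBall t r, v s‖ < ‖l‖ + 1 :=
    h.norm.eventually_lt_const (by linarith)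
  obtain ⟨r₀, hr₀, hsub⟩ := mem_nhdsGT_iff_exists_Ioo_subset.1 hev
  have hr₀ : 0 < r₀ := hr₀
  refine ⟨max (‖l‖ + 1) ((2 * r₀)⁻¹ * ∫ s, ‖v s‖), fun r hr => ?_⟩
  rcases lt_or_ge r r₀ with hlt | hge
  · exact (le_of_lt (hsub ⟨hr, hlt⟩)).trans (le_max_left _ _)
  · refine le_trans ?_ (le_max_right _ _)
    rw [setAverage_eq, norm_smul, measureReal_def, Real.volume_closedBall,
      ENNReal.toReal_ofReal (by linarith), Real.norm_of_nonneg (by positivity)]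
    have h1 : ‖∫ s in Metric.closedBall t r, v s‖ ≤ ∫ s, ‖v s‖ :=
      (norm_integral_le_integral_norm _).trans
        (setIntegral_le_integral hv.norm (Eventually.of_forall fun s => norm_nonneg _))
    gcongr

/-- Heat-kernel means of an integrable function converge to it almost everywhere; `δ` is the square
root of the time. -/
lemma ae_tendsto_gaussian {v : ℝ → ℂ} (hv : Integrable v) :
    ∀ᵐ t : ℝ, Tendsto (fun δ : ℝ =>
        ((2 * √π * δ : ℝ) : ℂ)⁻¹ * ∫ s, (Real.exp (-(1 / 4) * ((s - t) / δ) ^ 2) : ℂ) * v s)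
      (𝓝[>] (0 : ℝ)) (𝓝 (v t)) := by
  filter_upwards [IsUnifLocDoublingMeasure.ae_tendsto_average volume hv.locallyIntegrable 1]
    with t ht
  have hA : Tendsto (fun r => ⨍ s in Metric.closedBall t r, v s) (𝓝[>] 0) (𝓝 (v t)) := by
    refine ht (fun _ => t) (fun r => r) tendsto_id ?_
    filter_upwards [self_mem_nhdsWithin] with r hr
    have hr : (0 : ℝ) < r := hr
    simpa using hr.le
  obtain ⟨C, hC⟩ := exists_bound_average hv hA
  have hball : ∀ r > 0, ∫ s in Metric.closedBall t r, v s
      = (2 * r : ℂ) * ⨍ s in Metric.closedBall t r, v s := by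
    intro r hr
    rw [setAverage_eq, measureReal_def, Real.volume_closedBall,
      ENNReal.toReal_ofReal (by linarith), Complex.real_smul, ← mul_assoc]
    have : (r : ℂ) ≠ 0 := by exact_mod_cast hr.ne'
    push_cast
    rw [mul_inv_cancel₀ (by simpa using this), one_mul]
  set F : ℝ → ℝ → ℂ := fun δ ρ =>
    ((2 * ρ * tailWeight ρ : ℝ) : ℂ) * ⨍ s in Metric.closedBall t (δ * ρ), v s with hF
  have hrw : ∀ δ > 0, ∀ ρ > 0, F δ ρ
      = (δ : ℂ)⁻¹ * ((tailWeight ρ : ℂ) * ∫ s in Metric.closedBall t (δ * ρ), v s) := by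
    intro δ hδ ρ hρ
    have : (δ : ℂ) ≠ 0 := by exact_mod_cast hδ.ne'
    rw [hball _ (mul_pos hδ hρ), hF]
    push_cast
    field_simp
  have hlim : Tendsto (fun δ => ∫ ρ in Set.Ioi (0 : ℝ), F δ ρ) (𝓝[>] 0)
      (𝓝 (∫ ρ in Set.Ioi (0 : ℝ), ((2 * ρ * tailWeight ρ : ℝ) : ℂ) * v t)) := by
    refine tendsto_integral_filter_of_dominated_convergence
      (fun ρ => ‖2 * ρ * tailWeight ρ‖ * C) ?_ ?_ ?_ ?_
    · filter_upwards [self_mem_nhdsWithin] with δ hδ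
      have h := (integrable_layer hv t δ).integral_prod_left.const_mul (δ : ℂ)⁻¹
      refine h.aestronglyMeasurable.congr ?_
      filter_upwards [ae_restrict_mem measurableSet_Ioi] with ρ hρ
      rw [hrw δ hδ ρ hρ, ← layer_inner]
      rfl
    · filter_upwards [self_mem_nhdsWithin] with δ hδ
      filter_upwards [ae_restrict_mem measurableSet_Ioi] with ρ hρ
      rw [hF, norm_mul, Complex.norm_real]
      gcongr
      exact hC _ (mul_pos hδ hρ)
    · exact integrable_mul_tailWeight.norm.mul_const C
    · filter_upwards [ae_restrict_mem measurableSet_Ioi] with ρ hρ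
      refine Tendsto.const_mul _ (hA.comp ?_)
      have hρ : 0 < ρ := hρ
      refine tendsto_nhdsWithin_iff.2 ⟨?_, ?_⟩
      · have : Tendsto (fun δ : ℝ => δ * ρ) (𝓝 0) (𝓝 (0 * ρ)) := tendsto_id.mul_const ρ
        rw [zero_mul] at this
        exact this.mono_left nhdsWithin_le_nhds
      · filter_upwards [self_mem_nhdsWithin] with δ hδ using mul_pos hδ hρ
  rw [integral_mul_const, integral_complex_ofReal, integral_mul_tailWeight] at hlim
  have hπ : ((2 * √π : ℝ) : ℂ) ≠ 0 := by
    have : 0 < 2 * √π := by positivity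
    exact_mod_cast this.ne'
  have hfin := hlim.const_mul ((2 * √π : ℝ) : ℂ)⁻¹
  rw [← mul_assoc, inv_mul_cancel₀ hπ, one_mul] at hfin
  refine hfin.congr' ?_
  filter_upwards [self_mem_nhdsWithin] with δ hδ
  rw [integral_gaussian_eq_layers hv t hδ, setIntegral_congr_fun measurableSet_Ioi
    (fun ρ hρ => hrw δ hδ ρ hρ), integral_const_mul, ← mul_assoc]
  push_cast
  rw [mul_inv (2 * (√π : ℂ))]

/-! ### Reduction of the Gauss mean to a heat-kernel mean -/

/-- The principal square roots of the conjugate numbers `1 ∓ i cot α` are conjugate, as these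
numbers have real part `1`; hence the product is `|1 - i cot α| = |csc α|`. -/
lemma Aa_mul_Aa_neg {α : ℝ} (hs : Real.sin α ≠ 0) :
    Aa α * Aa (-α) = ((|1 / Real.sin α| : ℝ) : ℂ) := by
  set c : ℝ := Real.cos α / Real.sin α with hc
  set z : ℂ := 1 - Complex.I * (c : ℂ) with hz
  have hre : z.re = 1 := by simp [hz]
  have harg : z.arg ≠ Real.pi := by
    intro h
    have := (Complex.arg_eq_pi_iff.1 h).1
    linarith
  have hneg : Aa (-α) = (starRingEnd ℂ) (z ^ ((1 : ℂ) / 2)) := by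
    have h := Complex.cpow_conj z ((1 : ℂ) / 2) harg
    have h2 : (starRingEnd ℂ) ((1 : ℂ) / 2) = 1 / 2 := by
      rw [map_div₀, map_one, Complex.conj_ofNat]
    rw [h2] at h
    rw [h, Complex.conj_conj, Aa, Real.cos_neg, Real.sin_neg, hz, div_neg, ← hc]
    simp
  have hzn : ‖z‖ = |1 / Real.sin α| := by
    rw [← sq_eq_sq₀ (norm_nonneg _) (abs_nonneg _), sq_abs, ← Complex.normSq_eq_norm_sq,
      Complex.normSq_apply]
    have him : z.im = -c := by simp [hz]
    rw [hre, him, hc]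
    field_simp
    linarith [Real.sin_sq_add_cos_sq α]
  rw [hneg, Aa, ← hc, ← hz, Complex.mul_conj, Complex.normSq_eq_norm_sq,
    show ((1 : ℂ) / 2) = ((1 / 2 : ℝ) : ℂ) by push_cast; rfl, Complex.norm_cpow_real,
    ← Real.sqrt_eq_rpow, Real.sq_sqrt (norm_nonneg _), hzn]

/-- The unimodular quadratic phase `e^{πics²}`. -/
noncomputable def chirp (c s : ℝ) : ℂ := Complex.exp ((π * c * s ^ 2 : ℝ) * Complex.I)

lemma norm_chirp (c s : ℝ) : ‖chirp c s‖ = 1 := Complex.norm_exp_ofReal_mul_I _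

lemma integrable_chirp_mul {u : ℝ → ℂ} (hu : Integrable u) (c : ℝ) :
    Integrable fun s => chirp c s * u s := by
  refine hu.bdd_mul (c := 1) ?_ (Eventually.of_forall fun s => (norm_chirp c s).le)
  unfold chirp
  exact Continuous.aestronglyMeasurable (by fun_prop)

lemma Ker_mul_Ker_neg {α : ℝ} (hs : Real.sin α ≠ 0) (x s t : ℝ) :
    Ker α x s * Ker (-α) x t
      = ((|1 / Real.sin α| : ℝ) : ℂ) * chirp (-(Real.cos α / Real.sin α)) t
        * (chirp (Real.cos α / Real.sin α) s
          * Complex.exp (Complex.I * ((-(2 * π * (1 / Real.sin α) * (s - t)) : ℝ) : ℂ) * x)) := by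
  rw [← Aa_mul_Aa_neg hs]
  simp only [Ker, chirp, Real.cos_neg, Real.sin_neg]
  have : ∀ a b e1 e2 e3 e4 e5 : ℂ, e1 + e2 = e3 + (e4 + e5) →
      a * Complex.exp e1 * (b * Complex.exp e2)
        = a * b * Complex.exp e3 * (Complex.exp e4 * Complex.exp e5) := by
    intro a b e1 e2 e3 e4 e5 h
    rw [← Complex.exp_add e4, mul_assoc (a * b), ← Complex.exp_add, ← h, Complex.exp_add]
    ring
  apply this
  push_cast
  simp only [div_neg]
  ring

lemma integral_modulated_gaussian {k ε : ℝ} (hk : k ≠ 0) (hε : 0 < ε) (y : ℝ) :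
    ∫ x : ℝ, Complex.exp (Complex.I * ((-(2 * π * k * y) : ℝ) : ℂ) * x)
        * ((Real.exp (-4 * π ^ 2 * ε * x ^ 2 * k ^ 2) : ℝ) : ℂ)
      = ((|k| * (2 * √π * √ε) : ℝ) : ℂ)⁻¹ * (Real.exp (-(1 / 4) * (y / √ε) ^ 2) : ℂ) := by
  have hb : 0 < 4 * π ^ 2 * ε * k ^ 2 := by positivity
  have h := fourierIntegral_gaussian (b := ((4 * π ^ 2 * ε * k ^ 2 : ℝ) : ℂ))
    (by rwa [Complex.ofReal_re]) ((-(2 * π * k * y) : ℝ) : ℂ)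
  have hsqrt : ((π : ℂ) / ((4 * π ^ 2 * ε * k ^ 2 : ℝ) : ℂ)) ^ (1 / 2 : ℂ)
      = ((|k| * (2 * √π * √ε) : ℝ) : ℂ)⁻¹ := by
    rw [← Complex.ofReal_div, show (1 / 2 : ℂ) = ((1 / 2 : ℝ) : ℂ) by push_cast; rfl,
      ← Complex.ofReal_cpow (by positivity), ← Real.sqrt_eq_rpow, ← Complex.ofReal_inv]
    congr 1
    rw [Real.sqrt_eq_iff_mul_self_eq (by positivity) (by positivity)]
    have h1 : √π ^ 2 = π := Real.sq_sqrt Real.pi_pos.le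
    have h2 : √ε ^ 2 = ε := Real.sq_sqrt hε.le
    have h3 : |k| ^ 2 = k ^ 2 := sq_abs k
    rw [← mul_inv, show |k| * (2 * √π * √ε) * (|k| * (2 * √π * √ε))
      = |k| ^ 2 * (4 * √π ^ 2 * √ε ^ 2) by ring, h1, h2, h3]
    field_simp
  rw [hsqrt] at h
  convert h using 2
  · ext x
    congr 1
    push_cast
    congr 1
    ring
  · push_cast
    congr 1
    rw [div_pow, ← Complex.ofReal_pow √ε, Real.sq_sqrt hε.le]
    have : (k : ℂ) ≠ 0 := by exact_mod_cast hk
    have : (ε : ℂ) ≠ 0 := by exact_mod_cast hε.ne'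
    have : (π : ℂ) ≠ 0 := by exact_mod_cast Real.pi_ne_zero
    field_simp
    ring

/-- The Gauss mean of `u` is, up to a phase, the heat-kernel mean of the chirped function
`s ↦ e^{πi s² cot α} u(s)`. -/
lemma gaussMean_eq {α : ℝ} (hs : Real.sin α ≠ 0) {u : ℝ → ℂ} (hu : Integrable u)
    {ε : ℝ} (hε : 0 < ε) (t : ℝ) :
    ∫ x : ℝ, (∫ s : ℝ, Ker α x s * u s) * Ker (-α) x t *
          ((Real.exp (-4 * Real.pi ^ 2 * ε * x ^ 2 * (1 / Real.sin α) ^ 2) : ℝ) : ℂ)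
      = chirp (-(Real.cos α / Real.sin α)) t * (((2 * √π * √ε : ℝ) : ℂ)⁻¹ *
          ∫ s, (Real.exp (-(1 / 4) * ((s - t) / √ε) ^ 2) : ℂ)
            * (chirp (Real.cos α / Real.sin α) s * u s)) := by
  set c : ℝ := Real.cos α / Real.sin α with hc
  set k : ℝ := 1 / Real.sin α with hk
  have hk0 : k ≠ 0 := one_div_ne_zero hs
  set G : ℝ → ℂ := fun x => ((Real.exp (-4 * π ^ 2 * ε * x ^ 2 * k ^ 2) : ℝ) : ℂ) with hG
  set f : ℝ → ℝ → ℂ := fun x s => Complex.exp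
    (Complex.I * ((-(2 * π * k * (s - t)) : ℝ) : ℂ) * x) * (G x * (chirp c s * u s)) with hf
  have hGint : Integrable G := by
    have hb : 0 < 4 * π ^ 2 * ε * k ^ 2 := by positivity
    refine (integrable_exp_neg_mul_sq hb).ofReal.congr (Eventually.of_forall fun x => ?_)
    simp only [hG]
    congr 2
    ring
  have hfint : Integrable (Function.uncurry f) (volume.prod volume) := by
    refine (hGint.mul_prod (integrable_chirp_mul hu c)).bdd_mul (c := 1)
      (f := fun z : ℝ × ℝ =>
        Complex.exp (Complex.I * ((-(2 * π * k * (z.2 - t)) : ℝ) : ℂ) * z.1)) ?_ ?_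
    · exact Continuous.aestronglyMeasurable (by fun_prop)
    · refine Eventually.of_forall fun z => le_of_eq ?_
      rw [mul_assoc, mul_comm Complex.I, ← Complex.ofReal_mul]
      exact Complex.norm_exp_ofReal_mul_I _
  have h1 : ∀ x : ℝ, (∫ s : ℝ, Ker α x s * u s) * Ker (-α) x t * G x
      = (((|k| : ℝ) : ℂ) * chirp (-c) t) * ∫ s, f x s := by
    intro x
    rw [← integral_mul_const, ← integral_mul_const, ← integral_const_mul]
    congr 1; ext s
    rw [show Ker α x s * u s * Ker (-α) x t = Ker α x s * Ker (-α) x t * u s by ring,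
      Ker_mul_Ker_neg hs]
    simp only [hf]
    ring
  have h2 : ∀ s : ℝ, ∫ x, f x s = ((|k| * (2 * √π * √ε) : ℝ) : ℂ)⁻¹ *
      ((Real.exp (-(1 / 4) * ((s - t) / √ε) ^ 2) : ℂ) * (chirp c s * u s)) := by
    intro s
    rw [← mul_assoc, ← integral_modulated_gaussian hk0 hε, ← integral_mul_const]
    congr 1; ext x
    simp only [hf, hG, mul_assoc]
  change ∫ x : ℝ, (∫ s : ℝ, Ker α x s * u s) * Ker (-α) x t * G x = _
  simp_rw [h1]
  rw [integral_const_mul, integral_integral_swap hfint]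
  simp_rw [h2]
  rw [integral_const_mul]
  have : ((|k| : ℝ) : ℂ) ≠ 0 := by exact_mod_cast (abs_pos.2 hk0).ne'
  rw [Complex.ofReal_mul |k|, mul_inv]
  field_simp

theorem stmt15 (α : ℝ) (hα : ∀ n : ℤ, α ≠ n * Real.pi) (u : ℝ → ℂ)
    (hu : Integrable u volume) :
    ∀ᵐ t : ℝ, Tendsto (fun ε : ℝ =>
        ∫ x : ℝ, (∫ s : ℝ, Ker α x s * u s) * Ker (-α) x t *
          ((Real.exp (-4 * Real.pi ^ 2 * ε * x ^ 2 * (1 / Real.sin α) ^ 2) : ℝ) : ℂ))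
      (𝓝[>] (0 : ℝ)) (𝓝 (u t)) := by
  have hs : Real.sin α ≠ 0 := fun h => by
    obtain ⟨n, hn⟩ := Real.sin_eq_zero_iff.1 h
    exact hα n hn.symm
  set c : ℝ := Real.cos α / Real.sin α with hc
  filter_upwards [ae_tendsto_gaussian (integrable_chirp_mul hu c)] with t ht
  have hsqrt : Tendsto (fun ε : ℝ => √ε) (𝓝[>] 0) (𝓝[>] 0) := by
    refine tendsto_nhdsWithin_iff.2 ⟨?_, ?_⟩
    · have h := (Real.continuous_sqrt.tendsto 0).mono_left
        (nhdsWithin_le_nhds (s := Set.Ioi (0 : ℝ)))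
      rwa [Real.sqrt_zero] at h
    · filter_upwards [self_mem_nhdsWithin] with ε hε using Real.sqrt_pos.2 hε
  have hlim := (ht.comp hsqrt).const_mul (chirp (-c) t)
  have hcancel : chirp (-c) t * (chirp c t * u t) = u t := by
    rw [← mul_assoc, chirp, chirp, ← Complex.exp_add, ← add_mul, ← Complex.ofReal_add]
    simp
  rw [hcancel] at hlim
  refine hlim.congr' ?_
  filter_upwards [self_mem_nhdsWithin] with ε hε
  rw [gaussMean_eq hs hu hε t]
  rfl
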